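/- If n = 2 then λ_k = λ^G_{π,ν} for all k ≥ 1. If n ≥ 3 then: (1) if λ_0 = λ^G_{π,ν} then λ_k = λ^G_{π,ν} for all k ≥ 0; (2) if λ_0 ≠ λ^G_{π,ν} then λ_k > λ_{k+1} > λ^G_{π,ν} for all k ≥ 1; (3) the limit (λ*, ψ*) = lim_{k→∞} (λ_k, ψ_k) exists and satisfies λ* = E_ν(ψ*,ψ*)/Var_π(ψ*) = λ^G_{π,ν} and π(ψ*) = 0. -/

import Mathlib

open Finset

/-- Dirichlet form on the path with vertices `{1,…,n}`;
`ν i` denotes the weight of edge `{i, i+1}`. -/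
noncomputable def EForm (n : ℕ) (ν : ℕ → ℝ) (f g : ℕ → ℝ) : ℝ :=
  ∑ i ∈ Finset.Icc 1 (n - 1), (f i - f (i + 1)) * (g i - g (i + 1)) * ν i

/-- Mean of `f` with respect to `π` on `{1,…,n}`. -/
noncomputable def piMean (n : ℕ) (π : ℕ → ℝ) (f : ℕ → ℝ) : ℝ :=
  ∑ i ∈ Finset.Icc 1 n, f i * π i

/-- Variance of `f` with respect to `π` on `{1,…,n}`. -/
noncomputable def varPi (n : ℕ) (π : ℕ → ℝ) (f : ℕ → ℝ) : ℝ :=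
  piMean n π (fun i => (f i) ^ 2) - (piMean n π f) ^ 2

/-- `f` is non-constant on `{1,…,n}`. -/
def Nonconstant (n : ℕ) (f : ℕ → ℝ) : Prop :=
  ∃ i ∈ Finset.Icc 1 n, ∃ j ∈ Finset.Icc 1 n, f i ≠ f j

/-- `lam` is the spectral gap: the minimum of the Rayleigh quotients over
non-constant functions. -/
def IsSpectralGap (n : ℕ) (π ν : ℕ → ℝ) (lam : ℝ) : Prop :=
  IsLeast {r : ℝ | ∃ f : ℕ → ℝ, Nonconstant n f ∧ r = EForm n ν f f / varPi n π f} lam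

/-- The positive-part recursion with parameter `lam`:
`ψ(i+1) = ψ(i) + max{[ψ(i)−ψ(i−1)]ν(i−1,i) − λ π(i) ψ(i), 0}/ν(i,i+1)` for `1 ≤ i < n`. -/
def PosPartRec (n : ℕ) (π ν : ℕ → ℝ) (lam : ℝ) (ψ : ℕ → ℝ) : Prop :=
  ∀ i, 1 ≤ i → i < n →
    ψ (i + 1) = ψ i + max ((ψ i - ψ (i - 1)) * ν (i - 1) - lam * (π i * ψ i)) 0 / ν i

/-!
Let `flow ν f i = (f (i + 1) - f i) ν i`. Every minimizer `f` of the Rayleigh quotient satisfies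
`E(f, g) = gap * Cov(f, g)` for all `g`. Replacing a minimizer by its total variation keeps the
Dirichlet form and does not decrease the variance, so there is a nondecreasing minimizer `h`.

A solution `ψ` of the recursion with parameter `λ` is nondecreasing and satisfies
`flow (i - 1) - flow i = λ π i ψ i - defect i` for `i < n`, where `defect i ≥ 0` vanishes unless
`ψ` is constant on `{i, …, n}`. Summation by parts therefore gives, for nondecreasing `g`,
`E(g, ψ) ≥ λ (Cov(g, ψ) - (g n - π(g)) π(ψ))`, with equality for `g = ψ`. For `g = h` the left side
is `gap * Cov(h, ψ)` and `Cov(h, ψ) > 0`, so `π(ψ) > 0` as soon as `λ > gap`; for `g = ψ` it then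
follows that the Rayleigh quotient of `ψ` is below `λ`. Hence the sequence `λ_k` decreases; by
continuity its limit is a fixed point of the iteration, and the only fixed point is `gap`.

The value `gap` is not reached from `λ ≠ gap` when `n ≥ 3`: if `ψ` is a minimizer, then it is
strictly increasing, so its defects vanish, and comparing the two equations
`λ ψ i = gap * (ψ i - π(ψ))` at the vertices `1` and `2` gives `λ = gap`.
-/

section Covariance

variable {n : ℕ} {π f g : ℕ → ℝ}

/-- Covariance of `f` and `g` with respect to `π` on `{1,…,n}`, the bilinear form polarizing
`varPi`. -/
noncomputable def covPi (n : ℕ) (π f g : ℕ → ℝ) : ℝ :=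
  piMean n π (fun i => f i * g i) - piMean n π f * piMean n π g

theorem varPi_eq_covPi (n : ℕ) (π f : ℕ → ℝ) : varPi n π f = covPi n π f f := by
  simp only [varPi, covPi, pow_two]

theorem piMean_add_mul (n : ℕ) (π f g : ℕ → ℝ) (t : ℝ) :
    piMean n π (fun i => f i + t * g i) = piMean n π f + t * piMean n π g := by
  simp only [piMean, mul_sum, ← sum_add_distrib]
  exact sum_congr rfl fun i _ => by ring

theorem varPi_add_mul (n : ℕ) (π f g : ℕ → ℝ) (t : ℝ) :
    varPi n π (fun i => f i + t * g i) =
      varPi n π f + 2 * t * covPi n π f g + t ^ 2 * varPi n π g := by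
  have hsq : piMean n π (fun i => (f i + t * g i) ^ 2) =
      piMean n π (fun i => f i ^ 2) + 2 * t * piMean n π (fun i => f i * g i) +
        t ^ 2 * piMean n π (fun i => g i ^ 2) := by
    simp only [piMean, mul_sum, ← sum_add_distrib]
    exact sum_congr rfl fun i _ => by ring
  simp only [varPi, covPi, hsq, piMean_add_mul]
  ring

theorem two_mul_covPi (hπ1 : ∑ i ∈ Icc 1 n, π i = 1) (f g : ℕ → ℝ) :
    2 * covPi n π f g =
      ∑ i ∈ Icc 1 n, ∑ j ∈ Icc 1 n, π i * π j * ((f j - f i) * (g j - g i)) := by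
  have hexpand (i j : ℕ) : π i * π j * ((f j - f i) * (g j - g i)) =
      π i * (f j * g j * π j) + f i * g i * π i * π j -
        f i * π i * (g j * π j) - g i * π i * (f j * π j) := by ring
  simp only [hexpand, sum_add_distrib, sum_sub_distrib, ← mul_sum, ← sum_mul, hπ1, covPi, piMean]
  ring

theorem covPi_pos_of_monovaryOn (hπ : ∀ i ∈ Icc 1 n, 0 < π i) (hπ1 : ∑ i ∈ Icc 1 n, π i = 1)
    (hfg : MonovaryOn f g (Set.Icc 1 n)) {i j : ℕ} (hi : i ∈ Icc 1 n) (hj : j ∈ Icc 1 n)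
    (hij : 0 < (f j - f i) * (g j - g i)) : 0 < covPi n π f g := by
  have hnonneg : ∀ k ∈ Icc 1 n, ∀ l ∈ Icc 1 n,
      0 ≤ π k * π l * ((f l - f k) * (g l - g k)) := fun k hk l hl =>
    mul_nonneg (mul_pos (hπ k hk) (hπ l hl)).le
      (hfg.sub_mul_sub_nonneg (mem_Icc.1 hk) (mem_Icc.1 hl))
  have hsum := sum_pos' (fun k hk => sum_nonneg (hnonneg k hk))
    ⟨i, hi, sum_pos' (hnonneg i hi) ⟨j, hj, mul_pos (mul_pos (hπ i hi) (hπ j hj)) hij⟩⟩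
  linarith [two_mul_covPi hπ1 f g]

theorem covPi_pos_of_monotoneOn (hn : 1 ≤ n) (hπ : ∀ i ∈ Icc 1 n, 0 < π i)
    (hπ1 : ∑ i ∈ Icc 1 n, π i = 1) (hf : MonotoneOn f (Set.Icc 1 n))
    (hg : MonotoneOn g (Set.Icc 1 n)) (hf1n : f 1 < f n) (hg1n : g 1 < g n) :
    0 < covPi n π f g :=
  covPi_pos_of_monovaryOn hπ hπ1 (hf.monovaryOn hg) (left_mem_Icc.2 hn) (right_mem_Icc.2 hn)
    (mul_pos (sub_pos.2 hf1n) (sub_pos.2 hg1n))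

theorem varPi_pos (hπ : ∀ i ∈ Icc 1 n, 0 < π i) (hπ1 : ∑ i ∈ Icc 1 n, π i = 1)
    (hf : Nonconstant n f) : 0 < varPi n π f := by
  obtain ⟨i, hi, j, hj, hij⟩ := hf
  rw [varPi_eq_covPi]
  exact covPi_pos_of_monovaryOn hπ hπ1 (monovaryOn_self _ _) hi hj
    (mul_self_pos.2 (sub_ne_zero.2 hij.symm))

theorem varPi_le_varPi (hπ : ∀ i ∈ Icc 1 n, 0 ≤ π i) (hπ1 : ∑ i ∈ Icc 1 n, π i = 1)
    (hfg : ∀ i j, |f j - f i| ≤ |g j - g i|) : varPi n π f ≤ varPi n π g := by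
  have hsum : 2 * covPi n π f f ≤ 2 * covPi n π g g := by
    rw [two_mul_covPi hπ1, two_mul_covPi hπ1]
    exact sum_le_sum fun i hi => sum_le_sum fun j hj =>
      mul_le_mul_of_nonneg_left (abs_le_iff_mul_self_le.1 (hfg i j))
        (mul_nonneg (hπ i hi) (hπ j hj))
  rw [varPi_eq_covPi, varPi_eq_covPi]
  linarith

theorem piMean_lt_last (hn : 1 ≤ n) (hπ : ∀ i ∈ Icc 1 n, 0 < π i)
    (hπ1 : ∑ i ∈ Icc 1 n, π i = 1) (hf : MonotoneOn f (Set.Icc 1 n)) (hf1n : f 1 < f n) :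
    piMean n π f < f n := by
  have hle : ∀ i ∈ Icc 1 n, f i ≤ f n := fun i hi =>
    hf (mem_Icc.1 hi) (Set.right_mem_Icc.2 hn) (mem_Icc.1 hi).2
  calc piMean n π f < ∑ i ∈ Icc 1 n, f n * π i :=
        sum_lt_sum (fun i hi => mul_le_mul_of_nonneg_right (hle i hi) (hπ i hi).le)
          ⟨1, left_mem_Icc.2 hn, mul_lt_mul_of_pos_right hf1n (hπ 1 (left_mem_Icc.2 hn))⟩
    _ = f n := by rw [← mul_sum, hπ1, mul_one]

end Covariance

section Nonconstant

variable {n : ℕ} {f : ℕ → ℝ}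

theorem nonconstant_of_first_lt_last (hn : 1 ≤ n) (h : f 1 < f n) : Nonconstant n f :=
  ⟨1, left_mem_Icc.2 hn, n, right_mem_Icc.2 hn, h.ne⟩

theorem Nonconstant.first_lt_last (hf : Nonconstant n f) (hmono : MonotoneOn f (Set.Icc 1 n)) :
    f 1 < f n := by
  obtain ⟨i, hi, j, hj, hij⟩ := hf
  have hn : 1 ≤ n := (mem_Icc.1 hi).1.trans (mem_Icc.1 hi).2
  have hfirst {k : ℕ} (hk : k ∈ Icc 1 n) : f 1 ≤ f k :=
    hmono (Set.left_mem_Icc.2 hn) (mem_Icc.1 hk) (mem_Icc.1 hk).1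
  have hlast {k : ℕ} (hk : k ∈ Icc 1 n) : f k ≤ f n :=
    hmono (mem_Icc.1 hk) (Set.right_mem_Icc.2 hn) (mem_Icc.1 hk).2
  by_contra! h
  exact hij (by linarith [hfirst hi, hlast hi, hfirst hj, hlast hj])

theorem monotoneOn_Icc_of_le_succ (h : ∀ i ∈ Icc 1 (n - 1), f i ≤ f (i + 1)) :
    MonotoneOn f (Set.Icc 1 n) :=
  monotoneOn_of_le_add_one Set.ordConnected_Icc fun i _ hi hi' =>
    h i (mem_Icc.2 ⟨hi.1, Nat.le_sub_one_of_lt hi'.2⟩)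

theorem Nonconstant.exists_ne_succ (hf : Nonconstant n f) :
    ∃ i ∈ Icc 1 (n - 1), f i ≠ f (i + 1) := by
  by_contra! h
  have hneg : MonotoneOn (fun i => -f i) (Set.Icc 1 n) :=
    monotoneOn_Icc_of_le_succ fun i hi => (congrArg Neg.neg (h i hi)).le
  have hlt := hf.first_lt_last (monotoneOn_Icc_of_le_succ fun i hi => (h i hi).le)
  obtain ⟨i, hi, -⟩ := hf
  have hn : 1 ≤ n := (mem_Icc.1 hi).1.trans (mem_Icc.1 hi).2
  linarith [hneg (Set.left_mem_Icc.2 hn) (Set.right_mem_Icc.2 hn) hn]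

end Nonconstant

section DirichletForm

variable {n : ℕ} {ν f : ℕ → ℝ}

/-- The weighted increment `(f(i+1) − f(i)) ν(i,i+1)` of `f` along the edge `{i,i+1}`. -/
noncomputable def flow (ν f : ℕ → ℝ) (i : ℕ) : ℝ := (f (i + 1) - f i) * ν i

theorem flow_zero (hν0 : ν 0 = 0) (f : ℕ → ℝ) : flow ν f 0 = 0 := by
  rw [flow, hν0, mul_zero]

theorem EForm_comm (n : ℕ) (ν f g : ℕ → ℝ) : EForm n ν f g = EForm n ν g f :=
  sum_congr rfl fun i _ => by ring

theorem EForm_add_mul (n : ℕ) (ν f g : ℕ → ℝ) (t : ℝ) :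
    EForm n ν (fun i => f i + t * g i) (fun i => f i + t * g i) =
      EForm n ν f f + 2 * t * EForm n ν f g + t ^ 2 * EForm n ν g g := by
  simp only [EForm, mul_sum, ← sum_add_distrib]
  exact sum_congr rfl fun i _ => by ring

theorem EForm_self_nonneg (hν : ∀ i ∈ Icc 1 (n - 1), 0 ≤ ν i) (f : ℕ → ℝ) :
    0 ≤ EForm n ν f f :=
  sum_nonneg fun i hi => mul_nonneg (mul_self_nonneg _) (hν i hi)

theorem EForm_self_pos (hν : ∀ i ∈ Icc 1 (n - 1), 0 < ν i) (hf : Nonconstant n f) :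
    0 < EForm n ν f f := by
  obtain ⟨i, hi, hne⟩ := hf.exists_ne_succ
  exact sum_pos' (fun j hj => mul_nonneg (mul_self_nonneg _) (hν j hj).le)
    ⟨i, hi, mul_pos (mul_self_pos.2 (sub_ne_zero.2 hne)) (hν i hi)⟩

theorem EForm_threshold (ν f : ℕ → ℝ) {j : ℕ} (hj : j ∈ Icc 1 (n - 1)) :
    EForm n ν f (fun i => if j < i then 1 else 0) = flow ν f j := by
  rw [EForm, sum_eq_single_of_mem j hj]
  · simp [flow]
  · intro i _ hij
    have hiff : j < i + 1 ↔ j < i := by omega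
    simp [hiff]

theorem sum_Icc_mul_sub_by_parts (g D : ℕ → ℝ) (m : ℕ) :
    ∑ i ∈ Icc 1 m, g i * (D (i - 1) - D i) =
      ∑ i ∈ Icc 1 m, (g (i + 1) - g i) * D i + g 1 * D 0 - g (m + 1) * D m := by
  induction m with
  | zero => simp
  | succ m ih =>
    rw [sum_Icc_succ_top (by omega), sum_Icc_succ_top (by omega), ih, Nat.add_sub_cancel]
    ring

theorem EForm_eq_sum_sub_last (hν0 : ν 0 = 0) (g f : ℕ → ℝ) :
    EForm n ν g f = ∑ i ∈ Icc 1 (n - 1), (g i - g n) * (flow ν f (i - 1) - flow ν f i) := by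
  rcases Nat.eq_zero_or_pos n with rfl | hn
  · rfl
  rw [sum_Icc_mul_sub_by_parts (fun i => g i - g n), flow_zero hν0, Nat.sub_add_cancel hn,
    sub_self, mul_zero, zero_mul, add_zero, sub_zero]
  exact sum_congr rfl fun i _ => by rw [flow]; ring

end DirichletForm

section SpectralGap

variable {n : ℕ} {π ν f : ℕ → ℝ} {gap lam : ℝ}

/-- The weak form of the Neumann eigenvalue equation on the path with eigenvalue `lam`. Using the
covariance makes the equation invariant under adding constants to `f`, so that `f` need not have
mean zero. -/
def IsEigenfunction (n : ℕ) (π ν : ℕ → ℝ) (lam : ℝ) (f : ℕ → ℝ) : Prop :=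
  ∀ g : ℕ → ℝ, EForm n ν f g = lam * covPi n π f g

theorem IsEigenfunction.flow_pos (h : IsEigenfunction n π ν lam f) (hlam : 0 < lam)
    (hπ : ∀ i ∈ Icc 1 n, 0 < π i) (hπ1 : ∑ i ∈ Icc 1 n, π i = 1)
    (hf : MonotoneOn f (Set.Icc 1 n)) (hf1n : f 1 < f n) {j : ℕ} (hj : j ∈ Icc 1 (n - 1)) :
    0 < flow ν f j := by
  have hj' := mem_Icc.1 hj
  set θ : ℕ → ℝ := fun i => if j < i then 1 else 0 with hθ
  have hθmono : Monotone θ := fun i k hik => by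
    simp only [hθ]
    split_ifs <;> first | omega | norm_num
  have hθ1n : θ 1 < θ n := by
    simp [hθ, show ¬ j < 1 by omega, show j < n by omega]
  rw [← EForm_threshold ν f hj, h]
  exact mul_pos hlam
    (covPi_pos_of_monotoneOn (by omega) hπ hπ1 hf (hθmono.monotoneOn _) hf1n hθ1n)

theorem IsEigenfunction.flow_sub_flow (h : IsEigenfunction n π ν lam f) (hν0 : ν 0 = 0) {i : ℕ}
    (hi : i ∈ Icc 1 (n - 1)) :
    flow ν f (i - 1) - flow ν f i = lam * (π i * (f i - piMean n π f)) := by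
  have hi' := mem_Icc.1 hi
  have hin : i ∈ Icc 1 n := mem_Icc.2 ⟨hi'.1, by omega⟩
  have hE := h (fun j => if j = i then 1 else 0)
  rw [EForm_comm, EForm_eq_sum_sub_last hν0] at hE
  simp only [show n ≠ i by omega, if_false, sub_zero, ite_mul, one_mul, zero_mul, mul_ite, mul_one,
    mul_zero, sum_ite_eq', hi, hin, if_true, covPi, piMean] at hE
  rw [hE, piMean]
  ring

theorem IsSpectralGap.pos (hgap : IsSpectralGap n π ν gap) (hπ : ∀ i ∈ Icc 1 n, 0 < π i)
    (hπ1 : ∑ i ∈ Icc 1 n, π i = 1) (hν : ∀ i ∈ Icc 1 (n - 1), 0 < ν i) : 0 < gap := by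
  obtain ⟨f, hf, rfl⟩ := hgap.1
  exact div_pos (EForm_self_pos hν hf) (varPi_pos hπ hπ1 hf)

theorem IsSpectralGap.mul_varPi_le (hgap : IsSpectralGap n π ν gap)
    (hπ : ∀ i ∈ Icc 1 n, 0 < π i) (hπ1 : ∑ i ∈ Icc 1 n, π i = 1)
    (hν : ∀ i ∈ Icc 1 (n - 1), 0 ≤ ν i) (f : ℕ → ℝ) : gap * varPi n π f ≤ EForm n ν f f := by
  by_cases hf : Nonconstant n f
  · exact (le_div_iff₀ (varPi_pos hπ hπ1 hf)).1 (hgap.2 ⟨f, hf, rfl⟩)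
  · have hconst : ∀ i ∈ Icc 1 n, ∀ j ∈ Icc 1 n, f i = f j := by
      simpa only [Nonconstant, not_exists, not_and, not_not] using hf
    have hvar : 2 * covPi n π f f = 0 := by
      rw [two_mul_covPi hπ1]
      exact sum_eq_zero fun i hi => sum_eq_zero fun j hj => by simp [hconst i hi j hj]
    rw [varPi_eq_covPi, (mul_eq_zero_iff_left two_ne_zero).1 hvar, mul_zero]
    exact EForm_self_nonneg hν f

theorem IsSpectralGap.isEigenfunction (hgap : IsSpectralGap n π ν gap)
    (hπ : ∀ i ∈ Icc 1 n, 0 < π i) (hπ1 : ∑ i ∈ Icc 1 n, π i = 1)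
    (hν : ∀ i ∈ Icc 1 (n - 1), 0 ≤ ν i) (hf : EForm n ν f f = gap * varPi n π f) :
    IsEigenfunction n π ν gap f := by
  intro g
  have hquad (t : ℝ) : 0 ≤ (EForm n ν g g - gap * varPi n π g) * (t * t) +
      2 * (EForm n ν f g - gap * covPi n π f g) * t + 0 := by
    have h := hgap.mul_varPi_le hπ hπ1 hν (fun i => f i + t * g i)
    rw [EForm_add_mul, varPi_add_mul, hf] at h
    linarith
  have hdiscrim := discrim_le_zero hquad
  rw [discrim, mul_zero, sub_zero] at hdiscrim
  linarith [pow_eq_zero_iff two_ne_zero |>.1 (le_antisymm hdiscrim (sq_nonneg _))]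

/-- The total variation of `f` along the path up to `i`: a nondecreasing function with the same
Dirichlet form as `f`, whose increments over longer distances can only be larger. It starts at `0`
rather than `1`, which merely shifts it by a constant. -/
noncomputable def variation (f : ℕ → ℝ) (i : ℕ) : ℝ :=
  ∑ j ∈ range i, |f j - f (j + 1)|

theorem monotone_variation (f : ℕ → ℝ) : Monotone (variation f) :=
  monotone_nat_of_le_succ fun i => by
    rw [variation, variation, sum_range_succ]
    exact le_add_of_nonneg_right (abs_nonneg _)

theorem abs_sub_le_abs_variation_sub (f : ℕ → ℝ) (i j : ℕ) :
    |f j - f i| ≤ |variation f j - variation f i| := by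
  wlog hij : i ≤ j generalizing i j
  · rw [abs_sub_comm, abs_sub_comm (variation f j)]
    exact this j i (le_of_not_ge hij)
  calc |f j - f i| = dist (f i) (f j) := by rw [dist_comm, Real.dist_eq]
    _ ≤ variation f j - variation f i := by
      rw [variation, variation, ← sum_Ico_eq_sub _ hij]
      exact dist_le_Ico_sum_dist f hij
    _ ≤ |variation f j - variation f i| := le_abs_self _

theorem EForm_variation (n : ℕ) (ν f : ℕ → ℝ) :
    EForm n ν (variation f) (variation f) = EForm n ν f f := by
  refine sum_congr rfl fun i _ => ?_
  rw [variation, variation, sum_range_succ, sub_add_cancel_left, neg_mul_neg, abs_mul_abs_self]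

theorem IsSpectralGap.exists_monotone_isEigenfunction (hgap : IsSpectralGap n π ν gap)
    (hπ : ∀ i ∈ Icc 1 n, 0 < π i) (hπ1 : ∑ i ∈ Icc 1 n, π i = 1)
    (hν : ∀ i ∈ Icc 1 (n - 1), 0 < ν i) :
    ∃ h : ℕ → ℝ, Monotone h ∧ h 1 < h n ∧ IsEigenfunction n π ν gap h := by
  have hν' : ∀ i ∈ Icc 1 (n - 1), 0 ≤ ν i := fun i hi => (hν i hi).le
  have hpos := hgap.pos hπ hπ1 hν
  obtain ⟨f, hf, hfgap⟩ := hgap.1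
  have hfmin : EForm n ν f f = gap * varPi n π f :=
    ((eq_div_iff (varPi_pos hπ hπ1 hf).ne').1 hfgap).symm
  have hvar : varPi n π f ≤ varPi n π (variation f) :=
    varPi_le_varPi (fun i hi => (hπ i hi).le) hπ1 (abs_sub_le_abs_variation_sub f)
  have hmin : EForm n ν (variation f) (variation f) = gap * varPi n π (variation f) := by
    refine le_antisymm ?_ (hgap.mul_varPi_le hπ hπ1 hν' _)
    rw [EForm_variation, hfmin]
    exact mul_le_mul_of_nonneg_left hvar hpos.le
  have hnonconst : Nonconstant n (variation f) := by
    obtain ⟨i, hi, j, hj, hij⟩ := hf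
    refine ⟨i, hi, j, hj, fun heq => hij ?_⟩
    have hle := abs_sub_le_abs_variation_sub f i j
    rw [heq, sub_self, abs_zero] at hle
    exact (sub_eq_zero.1 (abs_nonpos_iff.1 hle)).symm
  exact ⟨variation f, monotone_variation f,
    hnonconst.first_lt_last ((monotone_variation f).monotoneOn _),
    hgap.isEigenfunction hπ hπ1 hν' hmin⟩

end SpectralGap

section Defect

variable {n : ℕ} {ν : ℕ → ℝ}

/-- The amount by which `ψ` fails to satisfy the eigenvalue equation with eigenvalue `lam` at the
vertex `i`. -/
noncomputable def defect (π ν : ℕ → ℝ) (lam : ℝ) (ψ : ℕ → ℝ) (i : ℕ) : ℝ :=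
  lam * (π i * ψ i) - (flow ν ψ (i - 1) - flow ν ψ i)

theorem EForm_eq_covPi_add_sum_defect (hn : 1 ≤ n) (hν0 : ν 0 = 0) (π : ℕ → ℝ) (lam : ℝ)
    (g ψ : ℕ → ℝ) :
    EForm n ν g ψ = lam * (covPi n π g ψ - (g n - piMean n π g) * piMean n π ψ) +
      ∑ i ∈ Icc 1 (n - 1), (g n - g i) * defect π ν lam ψ i := by
  have hcov : covPi n π g ψ - (g n - piMean n π g) * piMean n π ψ =
      ∑ i ∈ Icc 1 (n - 1), (g i - g n) * (π i * ψ i) := by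
    obtain ⟨m, rfl⟩ := Nat.exists_eq_add_of_le' hn
    calc _ = piMean (m + 1) π (fun i => g i * ψ i) - g (m + 1) * piMean (m + 1) π ψ := by
          rw [covPi]
          ring
      _ = ∑ i ∈ Icc 1 (m + 1), (g i - g (m + 1)) * (π i * ψ i) := by
          rw [piMean, piMean, mul_sum, ← sum_sub_distrib]
          exact sum_congr rfl fun i _ => by ring
      _ = _ := by
          rw [sum_Icc_succ_top (by omega), sub_self, zero_mul, add_zero, Nat.add_sub_cancel]
  rw [EForm_eq_sum_sub_last hν0, hcov, mul_sum, ← sum_add_distrib]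
  exact sum_congr rfl fun i _ => by rw [defect]; ring

end Defect

namespace PosPartRec

variable {n : ℕ} {π ν ψ g h : ℕ → ℝ} {lam gap : ℝ} {i : ℕ}

theorem flow_eq (hψ : PosPartRec n π ν lam ψ) (hν : ∀ i ∈ Icc 1 (n - 1), 0 < ν i)
    (hi : i ∈ Icc 1 (n - 1)) :
    flow ν ψ i = max (flow ν ψ (i - 1) - lam * (π i * ψ i)) 0 := by
  have hi' := mem_Icc.1 hi
  rw [flow, hψ i hi'.1 (by omega), add_sub_cancel_left, div_mul_cancel₀ _ (hν i hi).ne', flow,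
    Nat.sub_add_cancel hi'.1]

theorem flow_nonneg (hψ : PosPartRec n π ν lam ψ) (hν : ∀ i ∈ Icc 1 (n - 1), 0 < ν i)
    (hν0 : ν 0 = 0) (hi : i < n) : 0 ≤ flow ν ψ i := by
  rcases Nat.eq_zero_or_pos i with rfl | hpos
  · exact (flow_zero hν0 ψ).ge
  · rw [hψ.flow_eq hν (mem_Icc.2 ⟨hpos, by omega⟩)]
    exact le_max_right _ _

theorem monotoneOn (hψ : PosPartRec n π ν lam ψ) (hν : ∀ i ∈ Icc 1 (n - 1), 0 ≤ ν i) :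
    MonotoneOn ψ (Set.Icc 1 n) :=
  monotoneOn_Icc_of_le_succ fun i hi => by
    have hi' := mem_Icc.1 hi
    rw [hψ i hi'.1 (by omega)]
    exact le_add_of_nonneg_right (div_nonneg (le_max_right _ _) (hν i hi))

theorem first_lt_last (hψ : PosPartRec n π ν lam ψ) (hn : 2 ≤ n) (hπ1 : 0 < π 1)
    (hν : ∀ i ∈ Icc 1 (n - 1), 0 < ν i) (hν0 : ν 0 = 0) (hlam : 0 < lam) (hψ1 : ψ 1 < 0) :
    ψ 1 < ψ n := by
  have h1 : 1 ∈ Icc 1 (n - 1) := mem_Icc.2 ⟨le_rfl, by omega⟩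
  have hflow : 0 < flow ν ψ 1 := by
    rw [hψ.flow_eq hν h1, Nat.sub_self, flow_zero hν0, zero_sub]
    exact lt_max_of_lt_left
      (neg_pos.2 (mul_neg_of_pos_of_neg hlam (mul_neg_of_pos_of_neg hπ1 hψ1)))
  calc ψ 1 < ψ 2 := sub_pos.1 (pos_of_mul_pos_left hflow (hν 1 h1).le)
    _ ≤ ψ n := hψ.monotoneOn (fun i hi => (hν i hi).le) ⟨by omega, hn⟩ ⟨by omega, le_rfl⟩ hn

theorem eq_last_of_flow_eq_zero (hψ : PosPartRec n π ν lam ψ) (hπ : ∀ i ∈ Icc 1 n, 0 ≤ π i)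
    (hν : ∀ i ∈ Icc 1 (n - 1), 0 < ν i) (hlam : 0 ≤ lam) (hi : i ∈ Icc 1 (n - 1))
    (hψi : 0 ≤ ψ i) (hflow : flow ν ψ i = 0) : ψ i = ψ n := by
  have hi' := mem_Icc.1 hi
  have hsucc {j : ℕ} (hj : j ∈ Icc 1 (n - 1)) (hj0 : flow ν ψ j = 0) : ψ (j + 1) = ψ j :=
    sub_eq_zero.1 ((mul_eq_zero_iff_right (hν j hj).ne').1 hj0)
  have hfrozen : ∀ j, i ≤ j → j < n → flow ν ψ j = 0 ∧ ψ (j + 1) = ψ i := by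
    intro j hij
    induction j, hij using Nat.le_induction with
    | base => exact fun _ => ⟨hflow, hsucc hi hflow⟩
    | succ j _ ih =>
      intro hjn
      have hj : j + 1 ∈ Icc 1 (n - 1) := mem_Icc.2 ⟨by omega, by omega⟩
      obtain ⟨hj0, hjψ⟩ := ih (by omega)
      have hsucc0 : flow ν ψ (j + 1) = 0 := by
        rw [hψ.flow_eq hν hj, Nat.add_sub_cancel, hj0, hjψ, zero_sub]
        exact max_eq_right (neg_nonpos.2
          (mul_nonneg hlam (mul_nonneg (hπ _ (mem_Icc.2 ⟨by omega, by omega⟩)) hψi)))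
      exact ⟨hsucc0, (hsucc hj hsucc0).trans hjψ⟩
  have hlast := (hfrozen (n - 1) hi'.2 (by omega)).2
  rwa [Nat.sub_add_cancel (by omega), eq_comm] at hlast

theorem defect_nonneg (hψ : PosPartRec n π ν lam ψ) (hν : ∀ i ∈ Icc 1 (n - 1), 0 < ν i)
    (hi : i ∈ Icc 1 (n - 1)) : 0 ≤ defect π ν lam ψ i := by
  have hle := le_max_left (flow ν ψ (i - 1) - lam * (π i * ψ i)) 0
  rw [← hψ.flow_eq hν hi] at hle
  rw [defect]
  linarith

theorem defect_eq_zero_of_flow_pos (hψ : PosPartRec n π ν lam ψ)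
    (hν : ∀ i ∈ Icc 1 (n - 1), 0 < ν i) (hi : i ∈ Icc 1 (n - 1)) (hflow : 0 < flow ν ψ i) :
    defect π ν lam ψ i = 0 := by
  have hmax := hψ.flow_eq hν hi
  rcases max_choice (flow ν ψ (i - 1) - lam * (π i * ψ i)) 0 with h | h <;> rw [h] at hmax
  · rw [defect, hmax]
    ring
  · exact absurd hmax hflow.ne'

theorem last_sub_mul_defect (hψ : PosPartRec n π ν lam ψ) (hπ : ∀ i ∈ Icc 1 n, 0 < π i)
    (hν : ∀ i ∈ Icc 1 (n - 1), 0 < ν i) (hν0 : ν 0 = 0) (hlam : 0 < lam)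
    (hi : i ∈ Icc 1 (n - 1)) : (ψ n - ψ i) * defect π ν lam ψ i = 0 := by
  have hi' := mem_Icc.1 hi
  rcases (hψ.flow_nonneg hν hν0 (show i < n by omega)).eq_or_lt with hzero | hpos
  · have hprev := hψ.flow_nonneg hν hν0 (show i - 1 < n by omega)
    have hψi : 0 ≤ ψ i := by
      have hle := hψ.flow_eq hν hi ▸ le_max_left (flow ν ψ (i - 1) - lam * (π i * ψ i)) 0
      have hprod : 0 ≤ lam * (π i * ψ i) := by linarith
      exact nonneg_of_mul_nonneg_right (nonneg_of_mul_nonneg_right hprod hlam)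
        (hπ i (mem_Icc.2 ⟨hi'.1, by omega⟩))
    rw [hψ.eq_last_of_flow_eq_zero (fun j hj => (hπ j hj).le) hν hlam.le hi hψi hzero.symm,
      sub_self, zero_mul]
  · rw [hψ.defect_eq_zero_of_flow_pos hν hi hpos, mul_zero]

theorem EForm_self_eq (hψ : PosPartRec n π ν lam ψ) (hn : 1 ≤ n) (hπ : ∀ i ∈ Icc 1 n, 0 < π i)
    (hν : ∀ i ∈ Icc 1 (n - 1), 0 < ν i) (hν0 : ν 0 = 0) (hlam : 0 < lam) :
    EForm n ν ψ ψ = lam * (varPi n π ψ - (ψ n - piMean n π ψ) * piMean n π ψ) := by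
  rw [EForm_eq_covPi_add_sum_defect hn hν0 π lam, varPi_eq_covPi,
    sum_eq_zero fun i hi => hψ.last_sub_mul_defect hπ hν hν0 hlam hi, add_zero]

theorem le_EForm_of_monotone (hψ : PosPartRec n π ν lam ψ) (hn : 1 ≤ n)
    (hν : ∀ i ∈ Icc 1 (n - 1), 0 < ν i) (hν0 : ν 0 = 0) (hg : Monotone g) :
    lam * (covPi n π g ψ - (g n - piMean n π g) * piMean n π ψ) ≤ EForm n ν g ψ := by
  rw [EForm_eq_covPi_add_sum_defect hn hν0 π lam]
  refine le_add_of_nonneg_right (sum_nonneg fun i hi => ?_)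
  have hi' := mem_Icc.1 hi
  exact mul_nonneg (sub_nonneg.2 (hg (by omega))) (hψ.defect_nonneg hν hi)

theorem sub_mul_covPi_le (hψ : PosPartRec n π ν lam ψ) (hn : 1 ≤ n)
    (hν : ∀ i ∈ Icc 1 (n - 1), 0 < ν i) (hν0 : ν 0 = 0) (hmono : Monotone h)
    (heig : IsEigenfunction n π ν gap h) :
    (lam - gap) * covPi n π h ψ ≤ lam * (h n - piMean n π h) * piMean n π ψ := by
  have hle := hψ.le_EForm_of_monotone hn hν hν0 hmono
  rw [heig ψ] at hle
  linarith

end PosPartRec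

/-- The standing assumptions on the weights: `π` is a positive probability measure on `{1,…,n}` and
`ν` is positive on the edges, with the convention `ν(0,1) = 0`. -/
structure IsPathWeight (n : ℕ) (π ν : ℕ → ℝ) : Prop where
  pi_pos : ∀ i ∈ Icc 1 n, 0 < π i
  sum_pi : ∑ i ∈ Icc 1 n, π i = 1
  nu_pos : ∀ i ∈ Icc 1 (n - 1), 0 < ν i
  nu_zero : ν 0 = 0

namespace PosPartRec

variable {n : ℕ} {π ν ψ : ℕ → ℝ} {lam gap : ℝ}

theorem nonconstant (hψ : PosPartRec n π ν lam ψ) (hn : 2 ≤ n) (hw : IsPathWeight n π ν)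
    (hlam : 0 < lam) (hψ1 : ψ 1 < 0) : Nonconstant n ψ :=
  have hn' : 1 ≤ n := by omega
  nonconstant_of_first_lt_last hn'
    (hψ.first_lt_last hn (hw.pi_pos 1 (left_mem_Icc.2 hn')) hw.nu_pos hw.nu_zero hlam hψ1)

theorem exists_mul_sub_gap_le_piMean (hψ : PosPartRec n π ν lam ψ) (hn : 2 ≤ n)
    (hw : IsPathWeight n π ν) (hlam : 0 < lam) (hψ1 : ψ 1 < 0) (hgap : IsSpectralGap n π ν gap) :
    ∃ c : ℝ, 0 < c ∧ c * (lam - gap) ≤ piMean n π ψ := by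
  have hn' : 1 ≤ n := by omega
  have hψmono := hψ.monotoneOn fun i hi => (hw.nu_pos i hi).le
  have hψ1n := (hψ.nonconstant hn hw hlam hψ1).first_lt_last hψmono
  obtain ⟨h, hmono, h1n, heig⟩ := hgap.exists_monotone_isEigenfunction hw.pi_pos hw.sum_pi hw.nu_pos
  have hcov : 0 < covPi n π h ψ :=
    covPi_pos_of_monotoneOn hn' hw.pi_pos hw.sum_pi (hmono.monotoneOn _) hψmono h1n hψ1n
  have hlast : 0 < lam * (h n - piMean n π h) := mul_pos hlam
    (sub_pos.2 (piMean_lt_last hn' hw.pi_pos hw.sum_pi (hmono.monotoneOn _) h1n))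
  refine ⟨covPi n π h ψ / (lam * (h n - piMean n π h)), div_pos hcov hlast, ?_⟩
  rw [div_mul_eq_mul_div, div_le_iff₀ hlast, mul_comm (covPi n π h ψ), mul_comm (piMean n π ψ)]
  exact hψ.sub_mul_covPi_le hn' hw.nu_pos hw.nu_zero hmono heig

theorem exists_sub_rayleigh_eq_mul_piMean (hψ : PosPartRec n π ν lam ψ) (hn : 2 ≤ n)
    (hw : IsPathWeight n π ν) (hlam : 0 < lam) (hψ1 : ψ 1 < 0) :
    ∃ d : ℝ, 0 < d ∧ lam - EForm n ν ψ ψ / varPi n π ψ = d * piMean n π ψ := by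
  have hn' : 1 ≤ n := by omega
  have hnonconst := hψ.nonconstant hn hw hlam hψ1
  have hψmono := hψ.monotoneOn fun i hi => (hw.nu_pos i hi).le
  have hvar := varPi_pos hw.pi_pos hw.sum_pi hnonconst
  have hlast := piMean_lt_last hn' hw.pi_pos hw.sum_pi hψmono (hnonconst.first_lt_last hψmono)
  refine ⟨lam * (ψ n - piMean n π ψ) / varPi n π ψ,
    div_pos (mul_pos hlam (sub_pos.2 hlast)) hvar, ?_⟩
  rw [hψ.EForm_self_eq hn' hw.pi_pos hw.nu_pos hw.nu_zero hlam]
  field_simp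
  ring

theorem rayleigh_lt (hψ : PosPartRec n π ν lam ψ) (hn : 2 ≤ n) (hw : IsPathWeight n π ν)
    (hlam : 0 < lam) (hψ1 : ψ 1 < 0) (hgap : IsSpectralGap n π ν gap) (hlt : gap < lam) :
    EForm n ν ψ ψ / varPi n π ψ < lam := by
  obtain ⟨c, hc, hle⟩ := hψ.exists_mul_sub_gap_le_piMean hn hw hlam hψ1 hgap
  obtain ⟨d, hd, heq⟩ := hψ.exists_sub_rayleigh_eq_mul_piMean hn hw hlam hψ1
  have hmean : 0 < piMean n π ψ := (mul_pos hc (sub_pos.2 hlt)).trans_le hle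
  exact sub_pos.1 (heq ▸ mul_pos hd hmean)

theorem rayleigh_le (hψ : PosPartRec n π ν lam ψ) (hn : 2 ≤ n) (hw : IsPathWeight n π ν)
    (hlam : 0 < lam) (hψ1 : ψ 1 < 0) (hgap : IsSpectralGap n π ν gap) (hle : gap ≤ lam) :
    EForm n ν ψ ψ / varPi n π ψ ≤ lam := by
  obtain ⟨c, hc, hmul⟩ := hψ.exists_mul_sub_gap_le_piMean hn hw hlam hψ1 hgap
  obtain ⟨d, hd, heq⟩ := hψ.exists_sub_rayleigh_eq_mul_piMean hn hw hlam hψ1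
  have hmean : 0 ≤ piMean n π ψ := (mul_nonneg hc.le (sub_nonneg.2 hle)).trans hmul
  exact sub_nonneg.1 (heq ▸ mul_nonneg hd.le hmean)

theorem piMean_eq_zero_of_rayleigh_eq (hψ : PosPartRec n π ν lam ψ) (hn : 2 ≤ n)
    (hw : IsPathWeight n π ν) (hlam : 0 < lam) (hψ1 : ψ 1 < 0)
    (hfix : EForm n ν ψ ψ / varPi n π ψ = lam) : piMean n π ψ = 0 := by
  obtain ⟨d, hd, heq⟩ := hψ.exists_sub_rayleigh_eq_mul_piMean hn hw hlam hψ1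
  rw [hfix, sub_self, eq_comm] at heq
  exact (mul_eq_zero_iff_left hd.ne').1 heq

theorem eq_gap_of_rayleigh_eq_gap (hψ : PosPartRec n π ν lam ψ) (hn : 3 ≤ n)
    (hw : IsPathWeight n π ν) (hlam : 0 < lam) (hψ1 : ψ 1 < 0) (hgap : IsSpectralGap n π ν gap)
    (hray : EForm n ν ψ ψ / varPi n π ψ = gap) : lam = gap := by
  have hν : ∀ i ∈ Icc 1 (n - 1), 0 ≤ ν i := fun i hi => (hw.nu_pos i hi).le
  have hnonconst := hψ.nonconstant (by omega) hw hlam hψ1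
  have hψmono := hψ.monotoneOn hν
  have heig : IsEigenfunction n π ν gap ψ := hgap.isEigenfunction hw.pi_pos hw.sum_pi hν
    ((div_eq_iff (varPi_pos hw.pi_pos hw.sum_pi hnonconst).ne').1 hray)
  have hflow {i : ℕ} (hi : i ∈ Icc 1 (n - 1)) : 0 < flow ν ψ i :=
    heig.flow_pos (hgap.pos hw.pi_pos hw.sum_pi hw.nu_pos) hw.pi_pos hw.sum_pi hψmono
      (hnonconst.first_lt_last hψmono) hi
  have hlocal {i : ℕ} (hi : i ∈ Icc 1 (n - 1)) : lam * ψ i = gap * (ψ i - piMean n π ψ) := by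
    have hi' := mem_Icc.1 hi
    have hdefect := hψ.defect_eq_zero_of_flow_pos hw.nu_pos hi (hflow hi)
    rw [defect, heig.flow_sub_flow hw.nu_zero hi] at hdefect
    refine mul_left_cancel₀ (hw.pi_pos i (mem_Icc.2 ⟨hi'.1, by omega⟩)).ne' ?_
    linarith
  have h1 : 1 ∈ Icc 1 (n - 1) := mem_Icc.2 ⟨le_rfl, by omega⟩
  have h12 : ψ 1 < ψ 2 := sub_pos.1 (pos_of_mul_pos_left (hflow h1) (hν 1 h1))
  have hmul : (lam - gap) * (ψ 2 - ψ 1) = 0 := by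
    linarith [hlocal h1, hlocal (mem_Icc.2 ⟨by omega, by omega⟩ : 2 ∈ Icc 1 (n - 1))]
  exact sub_eq_zero.1 ((mul_eq_zero_iff_right (sub_pos.2 h12).ne').1 hmul)

end PosPartRec

theorem rayleigh_eq_of_two {π ν f : ℕ → ℝ} (hπ1 : ∑ i ∈ Icc 1 2, π i = 1)
    (hf : Nonconstant 2 f) : EForm 2 ν f f / varPi 2 π f = ν 1 / (π 1 * π 2) := by
  have hne : f 1 - f 2 ≠ 0 := by
    obtain ⟨i, hi, hif⟩ := hf.exists_ne_succ
    obtain rfl : i = 1 := by have := mem_Icc.1 hi; omega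
    exact sub_ne_zero.2 hif
  have hvar : varPi 2 π f = (f 1 - f 2) ^ 2 * (π 1 * π 2) := by
    have h := two_mul_covPi hπ1 f f
    simp only [sum_Icc_succ_top (show 1 ≤ 1 + 1 by omega), Icc_self, sum_singleton] at h
    rw [varPi_eq_covPi]
    linarith
  have hE : EForm 2 ν f f = (f 1 - f 2) ^ 2 * ν 1 := by
    rw [EForm, show 2 - 1 = 1 from rfl, Icc_self, sum_singleton, ← pow_two]
  rw [hE, hvar, mul_div_mul_left _ _ (pow_ne_zero 2 hne)]

section Limits

open Filter Topology

variable {ι : Type*} {l : Filter ι} {n : ℕ} {π ν φ : ℕ → ℝ} {ψ : ι → ℕ → ℝ} {lam : ι → ℝ} {L c : ℝ}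

theorem tendsto_EForm_self (ν : ℕ → ℝ) (h : ∀ i ∈ Icc 1 n, Tendsto (fun k => ψ k i) l (𝓝 (φ i))) :
    Tendsto (fun k => EForm n ν (ψ k) (ψ k)) l (𝓝 (EForm n ν φ φ)) :=
  tendsto_finsetSum _ fun i hi => by
    have hi' := mem_Icc.1 hi
    have hdiff : Tendsto (fun k => ψ k i - ψ k (i + 1)) l (𝓝 (φ i - φ (i + 1))) :=
      (h i (mem_Icc.2 ⟨hi'.1, by omega⟩)).sub (h (i + 1) (mem_Icc.2 ⟨by omega, by omega⟩))
    exact (hdiff.mul hdiff).mul_const _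

theorem tendsto_piMean (π : ℕ → ℝ) (h : ∀ i ∈ Icc 1 n, Tendsto (fun k => ψ k i) l (𝓝 (φ i))) :
    Tendsto (fun k => piMean n π (ψ k)) l (𝓝 (piMean n π φ)) :=
  tendsto_finsetSum _ fun i hi => (h i hi).mul_const _

theorem tendsto_varPi (π : ℕ → ℝ) (h : ∀ i ∈ Icc 1 n, Tendsto (fun k => ψ k i) l (𝓝 (φ i))) :
    Tendsto (fun k => varPi n π (ψ k)) l (𝓝 (varPi n π φ)) :=
  (tendsto_piMean π fun i hi => (h i hi).pow 2).sub ((tendsto_piMean π h).pow 2)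

theorem PosPartRec.exists_tendsto (hν0 : ν 0 = 0) (hlam : Tendsto lam l (𝓝 L))
    (hψ1 : Tendsto (fun k => ψ k 1) l (𝓝 c)) (hψ : ∀ k, PosPartRec n π ν (lam k) (ψ k)) :
    ∃ φ : ℕ → ℝ, ∀ i ∈ Icc 1 n, Tendsto (fun k => ψ k i) l (𝓝 (φ i)) := by
  -- The flow is carried along because the recursion at `i = 1` reads the junk value `ψ k 0`.
  have hpair (i : ℕ) (hi : 1 ≤ i) : i ≤ n → ∃ x y, Tendsto (fun k => ψ k i) l (𝓝 x) ∧
      Tendsto (fun k => (ψ k i - ψ k (i - 1)) * ν (i - 1)) l (𝓝 y) := by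
    induction i, hi using Nat.le_induction with
    | base => exact fun _ => ⟨c, 0, hψ1, by simpa only [Nat.sub_self, hν0, mul_zero] using
        tendsto_const_nhds⟩
    | succ i hi ih =>
      intro hin
      obtain ⟨x, y, hx, hy⟩ := ih (by omega)
      have hsucc : Tendsto (fun k => ψ k (i + 1)) l
          (𝓝 (x + max (y - L * (π i * x)) 0 / ν i)) := by
        simp only [hψ _ i hi hin]
        exact hx.add (((hy.sub (hlam.mul (hx.const_mul _))).max tendsto_const_nhds).div_const _)
      exact ⟨_, _, hsucc, (hsucc.sub hx).mul_const _⟩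
  choose! φ y hφ _ using hpair
  exact ⟨φ, fun i hi => hφ i (mem_Icc.1 hi).1 (mem_Icc.1 hi).2⟩

theorem PosPartRec.of_tendsto [l.NeBot] (hν0 : ν 0 = 0) (hlam : Tendsto lam l (𝓝 L))
    (hψ : ∀ k, PosPartRec n π ν (lam k) (ψ k))
    (hφ : ∀ i ∈ Icc 1 n, Tendsto (fun k => ψ k i) l (𝓝 (φ i))) : PosPartRec n π ν L φ := by
  intro i hi hin
  have hprev : Tendsto (fun k => (ψ k i - ψ k (i - 1)) * ν (i - 1)) l
      (𝓝 ((φ i - φ (i - 1)) * ν (i - 1))) := by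
    rcases hi.eq_or_lt with rfl | hi1
    · simpa only [Nat.sub_self, hν0, mul_zero] using tendsto_const_nhds
    · exact ((hφ i (mem_Icc.2 ⟨hi, hin.le⟩)).sub
        (hφ (i - 1) (mem_Icc.2 ⟨by omega, by omega⟩))).mul_const _
  have hi_lim := hφ i (mem_Icc.2 ⟨hi, hin.le⟩)
  refine tendsto_nhds_unique (hφ (i + 1) (mem_Icc.2 ⟨by omega, hin⟩)) ?_
  simp only [hψ _ i hi hin]
  exact hi_lim.add
    (((hprev.sub (hlam.mul (hi_lim.const_mul _))).max tendsto_const_nhds).div_const _)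

end Limits

/-- A run of Algorithm (A1) started from `lam 0`: `ψ k` solves the recursion with parameter `lam k`
and initial value `-a`, and its Rayleigh quotient is the next parameter. -/
structure IsPosPartIteration (n : ℕ) (π ν : ℕ → ℝ) (a : ℝ) (lam : ℕ → ℝ) (ψ : ℕ → ℕ → ℝ) :
    Prop where
  a_pos : 0 < a
  lam_zero_pos : 0 < lam 0
  psi_one : ∀ k, ψ k 1 = -a
  posPartRec : ∀ k, PosPartRec n π ν (lam k) (ψ k)
  lam_succ : ∀ k, lam (k + 1) = EForm n ν (ψ k) (ψ k) / varPi n π (ψ k)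

namespace IsPosPartIteration

open Filter Topology

variable {n : ℕ} {π ν : ℕ → ℝ} {a gap : ℝ} {lam : ℕ → ℝ} {ψ : ℕ → ℕ → ℝ}

theorem psi_one_neg (hA : IsPosPartIteration n π ν a lam ψ) (k : ℕ) : ψ k 1 < 0 := by
  rw [hA.psi_one]
  exact neg_neg_of_pos hA.a_pos

theorem gap_le_lam_succ_of_pos (hA : IsPosPartIteration n π ν a lam ψ) (hn : 2 ≤ n)
    (hw : IsPathWeight n π ν) (hgap : IsSpectralGap n π ν gap) {k : ℕ} (hk : 0 < lam k) :
    gap ≤ lam (k + 1) :=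
  hgap.2 ⟨ψ k, (hA.posPartRec k).nonconstant hn hw hk (hA.psi_one_neg k), hA.lam_succ k⟩

theorem lam_pos (hA : IsPosPartIteration n π ν a lam ψ) (hn : 2 ≤ n) (hw : IsPathWeight n π ν)
    (hgap : IsSpectralGap n π ν gap) (k : ℕ) : 0 < lam k := by
  induction k with
  | zero => exact hA.lam_zero_pos
  | succ k ih =>
    exact (hgap.pos hw.pi_pos hw.sum_pi hw.nu_pos).trans_le
      (hA.gap_le_lam_succ_of_pos hn hw hgap ih)

theorem gap_le_lam_succ (hA : IsPosPartIteration n π ν a lam ψ) (hn : 2 ≤ n)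
    (hw : IsPathWeight n π ν) (hgap : IsSpectralGap n π ν gap) (k : ℕ) : gap ≤ lam (k + 1) :=
  hA.gap_le_lam_succ_of_pos hn hw hgap (hA.lam_pos hn hw hgap k)

theorem lam_succ_lt (hA : IsPosPartIteration n π ν a lam ψ) (hn : 2 ≤ n) (hw : IsPathWeight n π ν)
    (hgap : IsSpectralGap n π ν gap) {k : ℕ} (hk : gap < lam k) : lam (k + 1) < lam k := by
  rw [hA.lam_succ]
  exact (hA.posPartRec k).rayleigh_lt hn hw (hA.lam_pos hn hw hgap k) (hA.psi_one_neg k) hgap hk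

theorem lam_succ_le (hA : IsPosPartIteration n π ν a lam ψ) (hn : 2 ≤ n) (hw : IsPathWeight n π ν)
    (hgap : IsSpectralGap n π ν gap) {k : ℕ} (hk : gap ≤ lam k) : lam (k + 1) ≤ lam k := by
  rw [hA.lam_succ]
  exact (hA.posPartRec k).rayleigh_le hn hw (hA.lam_pos hn hw hgap k) (hA.psi_one_neg k) hgap hk

theorem lam_eq_gap_of_two (hA : IsPosPartIteration 2 π ν a lam ψ) (hw : IsPathWeight 2 π ν)
    (hgap : IsSpectralGap 2 π ν gap) (k : ℕ) : lam (k + 1) = gap := by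
  obtain ⟨f, hf, hfgap⟩ := hgap.1
  have hψ := (hA.posPartRec k).nonconstant le_rfl hw (hA.lam_pos le_rfl hw hgap k)
    (hA.psi_one_neg k)
  rw [hA.lam_succ, rayleigh_eq_of_two hw.sum_pi hψ, hfgap, rayleigh_eq_of_two hw.sum_pi hf]

theorem lam_eq_gap (hA : IsPosPartIteration n π ν a lam ψ) (hn : 2 ≤ n) (hw : IsPathWeight n π ν)
    (hgap : IsSpectralGap n π ν gap) (h0 : lam 0 = gap) (k : ℕ) : lam k = gap := by
  induction k with
  | zero => exact h0
  | succ k ih =>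
    exact le_antisymm ((hA.lam_succ_le hn hw hgap ih.ge).trans_eq ih)
      (hA.gap_le_lam_succ hn hw hgap k)

theorem lam_ne_gap (hA : IsPosPartIteration n π ν a lam ψ) (hn : 3 ≤ n) (hw : IsPathWeight n π ν)
    (hgap : IsSpectralGap n π ν gap) (h0 : lam 0 ≠ gap) (k : ℕ) : lam k ≠ gap := by
  induction k with
  | zero => exact h0
  | succ k ih =>
    intro hk
    rw [hA.lam_succ] at hk
    exact ih ((hA.posPartRec k).eq_gap_of_rayleigh_eq_gap hn hw
      (hA.lam_pos (by omega) hw hgap k) (hA.psi_one_neg k) hgap hk)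

theorem gap_lt_lam_succ (hA : IsPosPartIteration n π ν a lam ψ) (hn : 3 ≤ n)
    (hw : IsPathWeight n π ν) (hgap : IsSpectralGap n π ν gap) (h0 : lam 0 ≠ gap) (k : ℕ) :
    gap < lam (k + 1) :=
  (hA.gap_le_lam_succ (by omega) hw hgap k).lt_of_ne (hA.lam_ne_gap hn hw hgap h0 (k + 1)).symm

theorem exists_tendsto_lam (hA : IsPosPartIteration n π ν a lam ψ) (hn : 2 ≤ n)
    (hw : IsPathWeight n π ν) (hgap : IsSpectralGap n π ν gap) :
    ∃ L, gap ≤ L ∧ Tendsto lam atTop (𝓝 L) := by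
  have hge := hA.gap_le_lam_succ hn hw hgap
  have hanti : Antitone fun k => lam (k + 1) :=
    antitone_nat_of_succ_le fun k => hA.lam_succ_le hn hw hgap (hge k)
  have hlim := tendsto_atTop_ciInf hanti ⟨gap, Set.forall_mem_range.2 hge⟩
  exact ⟨_, ge_of_tendsto' hlim hge, (tendsto_add_atTop_iff_nat 1).1 hlim⟩

theorem exists_tendsto (hA : IsPosPartIteration n π ν a lam ψ) (hn : 2 ≤ n)
    (hw : IsPathWeight n π ν) (hgap : IsSpectralGap n π ν gap) :
    ∃ φ : ℕ → ℝ, Tendsto lam atTop (𝓝 gap) ∧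
      (∀ i ∈ Icc 1 n, Tendsto (fun k => ψ k i) atTop (𝓝 (φ i))) ∧
      gap = EForm n ν φ φ / varPi n π φ ∧ piMean n π φ = 0 := by
  obtain ⟨L, hL, hlam⟩ := hA.exists_tendsto_lam hn hw hgap
  have hL0 : 0 < L := (hgap.pos hw.pi_pos hw.sum_pi hw.nu_pos).trans_le hL
  have hψ1 : Tendsto (fun k => ψ k 1) atTop (𝓝 (-a)) := by
    simpa only [hA.psi_one] using tendsto_const_nhds
  obtain ⟨φ, hφ⟩ := PosPartRec.exists_tendsto hw.nu_zero hlam hψ1 hA.posPartRec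
  have hφrec : PosPartRec n π ν L φ := PosPartRec.of_tendsto hw.nu_zero hlam hA.posPartRec hφ
  have hφ1 : φ 1 < 0 := by
    rw [tendsto_nhds_unique (hφ 1 (mem_Icc.2 ⟨le_rfl, by omega⟩)) hψ1]
    exact neg_neg_of_pos hA.a_pos
  have hvar := varPi_pos hw.pi_pos hw.sum_pi (hφrec.nonconstant hn hw hL0 hφ1)
  have hfix : EForm n ν φ φ / varPi n π φ = L := by
    refine tendsto_nhds_unique ?_ ((tendsto_add_atTop_iff_nat 1).2 hlam)
    simp only [hA.lam_succ]
    exact (tendsto_EForm_self ν hφ).div (tendsto_varPi π hφ) hvar.ne'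
  obtain rfl : gap = L := hL.eq_or_lt.resolve_right fun hlt =>
    (hφrec.rayleigh_lt hn hw hL0 hφ1 hgap hlt).ne hfix
  exact ⟨φ, hlam, hφ, hfix.symm, hφrec.piMean_eq_zero_of_rayleigh_eq hn hw hL0 hφ1 hfix⟩

end IsPosPartIteration

theorem stmt1 (n : ℕ) (hn : 2 ≤ n) (π ν : ℕ → ℝ)
    (hπ : ∀ i ∈ Finset.Icc 1 n, 0 < π i)
    (hπ1 : ∑ i ∈ Finset.Icc 1 n, π i = 1)
    (hν : ∀ i ∈ Finset.Icc 1 (n - 1), 0 < ν i)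
    (hν0 : ν 0 = 0) (hνn : ν n = 0)
    (gap : ℝ) (hgap : IsSpectralGap n π ν gap)
    (a : ℝ) (ha : 0 < a)
    (lamSeq : ℕ → ℝ) (hlam0 : 0 < lamSeq 0)
    (ψ : ℕ → ℕ → ℝ)
    (hψ1 : ∀ k, ψ k 1 = -a)
    (hrec : ∀ k, PosPartRec n π ν (lamSeq k) (ψ k))
    (hupd : ∀ k, lamSeq (k + 1) = EForm n ν (ψ k) (ψ k) / varPi n π (ψ k)) :
    (n = 2 → ∀ k, 1 ≤ k → lamSeq k = gap) ∧
    (3 ≤ n →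
      (lamSeq 0 = gap → ∀ k, lamSeq k = gap) ∧
      (lamSeq 0 ≠ gap → ∀ k, 1 ≤ k → lamSeq (k + 1) < lamSeq k ∧ gap < lamSeq (k + 1)) ∧
      (∃ lamStar : ℝ, ∃ ψStar : ℕ → ℝ,
        Filter.Tendsto lamSeq Filter.atTop (nhds lamStar) ∧
        (∀ i ∈ Finset.Icc 1 n,
          Filter.Tendsto (fun k => ψ k i) Filter.atTop (nhds (ψStar i))) ∧
        lamStar = EForm n ν ψStar ψStar / varPi n π ψStar ∧
        lamStar = gap ∧ piMean n π ψStar = 0)) := by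
  have hw : IsPathWeight n π ν := ⟨hπ, hπ1, hν, hν0⟩
  have hA : IsPosPartIteration n π ν a lamSeq ψ := ⟨ha, hlam0, hψ1, hrec, hupd⟩
  refine ⟨fun hn2 k hk => ?_, fun hn3 => ⟨hA.lam_eq_gap hn hw hgap, fun h0 k hk => ?_, ?_⟩⟩
  · subst hn2
    obtain ⟨k, rfl⟩ := Nat.exists_eq_add_of_le' hk
    exact hA.lam_eq_gap_of_two hw hgap k
  · obtain ⟨k, rfl⟩ := Nat.exists_eq_add_of_le' hk
    have hgt := hA.gap_lt_lam_succ hn3 hw hgap h0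
    exact ⟨hA.lam_succ_lt hn hw hgap (hgt k), hgt (k + 1)⟩
  · obtain ⟨φ, hlam, hφ, hfix, hmean⟩ := hA.exists_tendsto hn hw hgap
    exact ⟨gap, φ, hlam, hφ, hfix, rfl, hmean⟩
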